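/- arXiv:2206.02348 — 2 statements merged into one kernel-verified Lean document; each statement's English description precedes it below -/
import Mathlib

section
/- There is a universal constant C > 0 such that for every ε with 0 < ε < r/4, the Kullback–Leibler divergence between an r-smoothed density and its shift by 2ε satisfies | KL(f_r ‖ f_r^{2ε}) − 2·ε²·I_r | ≤ C·√(I_r)·ε³/r². -/
/-!
Write `p` for the smoothed density, `s = p' / p` for its score, `I = ∫ p s²` and `δ = 2ε`.
The fundamental theorem of calculus for `log p`, Fubini and translation give
`KL = ∫₀^δ ∫ p(x + t) s(x) dx dt`. Expand `p(x + t) = p(x) + t p'(x) + D_t(x)`. The first term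
contributes `∫ p' = 0` and the second `t I`, which integrates to `δ² I / 2 = 2 ε² I`
(`kl_shift_of_remainder`). The error is therefore `∫₀^δ ∫ D_t s`, and Cauchy–Schwarz in
`L²(1 / p)` bounds the inner integral by `√I · √(∫ D_t² / p)` (`weighted_cauchy_schwarz`).

Both `D_t` and `p'` have the form `x ↦ ∫ f(y) g(x - y) φ_r(x - y) dy` with `φ_r` the Gaussian
density, so `D_t / p` is the posterior mean of `g(Z)` given `Y + Z = x`, and conditional Jensen
gives `∫ D_t² / p ≤ E[g(Z)²]` (`sq_div_smoothed`). For `D_t` the kernel `g` is the relative Taylor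
remainder `φ_r(z + t) / φ_r(z) - 1 + t z / r²`. With `τ = t / r ≤ 1 / 2` and `ζ = z / r` it is
`O(τ² exp(3 |ζ| / 2))` (`remainder_kernel_bound`), hence `E[g(Z)²] ≤ K t⁴ / r⁴` with `K` universal.
The total error is at most `δ · √(K I) δ² / r²`.
-/

open MeasureTheory Real

noncomputable section

/-- The Gaussian density with mean 0 and variance `r ^ 2`. -/
def gaussPdf (r x : ℝ) : ℝ :=
  Real.exp (-(x ^ 2) / (2 * r ^ 2)) / Real.sqrt (2 * Real.pi * r ^ 2)

/-- The `r`-smoothed density `f_r`, i.e. the density of `Y + Z` where `Y ~ f` and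
`Z ~ N(0, r²)` independent. -/
def smoothed (f : ℝ → ℝ) (r x : ℝ) : ℝ := ∫ y, f y * gaussPdf r (x - y)

/-- The score function `s_r = f_r' / f_r` of the smoothed density. -/
def score (f : ℝ → ℝ) (r x : ℝ) : ℝ :=
  deriv (fun t => smoothed f r t) x / smoothed f r x

/-- The Fisher information `I_r = E_{x ~ f_r}[s_r(x)²]` of the smoothed density. -/
def fisherInfo (f : ℝ → ℝ) (r : ℝ) : ℝ := ∫ x, score f r x ^ 2 * smoothed f r x

/-- `f` is a probability density on `ℝ`. -/
def IsDensity (f : ℝ → ℝ) : Prop :=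
  (∀ x, 0 ≤ f x) ∧ MeasureTheory.Integrable f ∧ (∫ x, f x) = 1

/-- The Kullback–Leibler divergence `∫ p log(p/q)` between densities on `ℝ`. -/
def KLdiv (p q : ℝ → ℝ) : ℝ := ∫ x, p x * Real.log (p x / q x)

/-! ### The Gaussian kernel -/

lemma gaussPdf_pos {r : ℝ} (hr : 0 < r) (z : ℝ) : 0 < gaussPdf r z := by
  unfold gaussPdf; positivity

lemma continuous_gaussPdf (r : ℝ) : Continuous (gaussPdf r) := by
  unfold gaussPdf; fun_prop

lemma gaussPdf_add {r : ℝ} (hr : 0 < r) (z t : ℝ) :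
    gaussPdf r (z + t) = Real.exp (-(t * z + t ^ 2 / 2) / r ^ 2) * gaussPdf r z := by
  unfold gaussPdf
  rw [← mul_div_assoc, ← Real.exp_add]
  congr 2
  field_simp
  ring

lemma gaussPdf_scale {r : ℝ} (hr : 0 < r) (z : ℝ) : gaussPdf r z = r⁻¹ * gaussPdf 1 (z / r) := by
  unfold gaussPdf
  rw [Real.sqrt_mul (by positivity), Real.sqrt_sq hr.le]
  have : -(z ^ 2) / (2 * r ^ 2) = -(z / r) ^ 2 / (2 * 1 ^ 2) := by field_simp
  rw [this]
  simp
  field_simp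

lemma hasDerivAt_gaussPdf {r : ℝ} (hr : 0 < r) (z : ℝ) :
    HasDerivAt (gaussPdf r) (-(z / r ^ 2) * gaussPdf r z) z := by
  have h : HasDerivAt (fun x : ℝ => -(x ^ 2) / (2 * r ^ 2)) (-(z / r ^ 2)) z := by
    have := ((hasDerivAt_pow 2 z).neg).div_const (2 * r ^ 2)
    refine this.congr_deriv ?_
    norm_num
    field_simp
  have := (h.exp).div_const (Real.sqrt (2 * Real.pi * r ^ 2))
  refine this.congr_deriv ?_
  unfold gaussPdf
  ring

lemma integrable_weight_one : Integrable fun z : ℝ => Real.exp (3 * |z|) * gaussPdf 1 z := by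
  have h := ((integrable_exp_neg_mul_sq (b := 1 / 4) (by norm_num)).const_mul
    (Real.exp 9 / Real.sqrt (2 * Real.pi * 1 ^ 2)))
  refine h.mono' ?_ (Filter.Eventually.of_forall fun z => ?_)
  · exact ((by fun_prop : Continuous fun z : ℝ => Real.exp (3 * |z|)).mul
      (continuous_gaussPdf 1)).aestronglyMeasurable
  · have := gaussPdf_pos one_pos z
    rw [Real.norm_of_nonneg (by positivity)]
    unfold gaussPdf
    rw [← mul_div_assoc, ← Real.exp_add, div_mul_eq_mul_div, ← Real.exp_add]
    refine div_le_div_of_nonneg_right (Real.exp_le_exp.2 ?_) (Real.sqrt_nonneg _)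
    nlinarith [sq_nonneg (|z| - 6), sq_abs z]

/-- By scaling, the exponential moment of `|Z| / r` does not depend on `r`. -/
lemma integral_weight {r : ℝ} (hr : 0 < r) :
    Integrable (fun z : ℝ => Real.exp (3 * |z / r|) * gaussPdf r z) ∧
      ∫ z, Real.exp (3 * |z / r|) * gaussPdf r z = ∫ z, Real.exp (3 * |z|) * gaussPdf 1 z := by
  have e : (fun z : ℝ => Real.exp (3 * |z / r|) * gaussPdf r z) =
      fun z => r⁻¹ * ((fun z => Real.exp (3 * |z|) * gaussPdf 1 z) (z / r)) := by
    ext z; rw [gaussPdf_scale hr]; ring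
  rw [e]
  refine ⟨(integrable_weight_one.comp_div hr.ne').const_mul _, ?_⟩
  rw [integral_const_mul,
    Measure.integral_comp_div (fun z => Real.exp (3 * |z|) * gaussPdf 1 z), abs_of_pos hr,
    smul_eq_mul, inv_mul_cancel_left₀ hr.ne']

/-- A kernel with `g(z)² ≤ c exp(3 |z / r|)` has second moment under `N(0, r²)` at most `c` times a
constant that does not depend on `r`. -/
lemma kernel_sq {r : ℝ} (hr : 0 < r) {g : ℝ → ℝ} (hg : Continuous g) {c : ℝ}
    (hb : ∀ z, g z ^ 2 ≤ c * Real.exp (3 * |z / r|)) :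
    Integrable (fun z => g z ^ 2 * gaussPdf r z) ∧
      ∫ z, g z ^ 2 * gaussPdf r z ≤ c * ∫ z, Real.exp (3 * |z|) * gaussPdf 1 z := by
  obtain ⟨h1, h2⟩ := integral_weight hr
  have hle : ∀ z, g z ^ 2 * gaussPdf r z ≤ c * (Real.exp (3 * |z / r|) * gaussPdf r z) := by
    intro z
    rw [← mul_assoc]
    exact mul_le_mul_of_nonneg_right (hb z) (gaussPdf_pos hr z).le
  have hi : Integrable (fun z => g z ^ 2 * gaussPdf r z) := by
    refine (h1.const_mul c).mono'
      ((hg.pow 2).mul (continuous_gaussPdf r)).aestronglyMeasurable (.of_forall fun z => ?_)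
    rw [Real.norm_of_nonneg (mul_nonneg (sq_nonneg _) (gaussPdf_pos hr z).le)]
    exact hle z
  refine ⟨hi, ?_⟩
  rw [← h2, ← integral_const_mul]
  exact integral_mono hi (h1.const_mul c) hle

lemma integrable_gaussPdf {r : ℝ} (hr : 0 < r) : Integrable (gaussPdf r) := by
  have := (kernel_sq hr (g := fun _ => 1) continuous_const (c := 1) (fun z => by
    simp)).1
  simpa using this

lemma kernel_integrable {r : ℝ} (hr : 0 < r) {g : ℝ → ℝ} (hg : Continuous g)
    (h2 : Integrable (fun z => g z ^ 2 * gaussPdf r z)) :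
    Integrable (fun z => g z * gaussPdf r z) := by
  refine (h2.add (integrable_gaussPdf hr)).mono'
    (hg.mul (continuous_gaussPdf r)).aestronglyMeasurable (.of_forall fun z => ?_)
  have := gaussPdf_pos hr z
  rw [norm_mul, Real.norm_of_nonneg this.le, Real.norm_eq_abs]
  simp only [Pi.add_apply]
  nlinarith [sq_nonneg (|g z| - 1), sq_abs (g z)]

/-! ### Regularity of the smoothed density -/

/-- Integrals over `y` of `f y * k (x - y)` are convolutions; this packages their existence almost
everywhere, integrability and total integral. -/
lemma conv_facts {f k : ℝ → ℝ} (hf : Integrable f) (hk : Integrable k) :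
    (∀ᵐ x, Integrable fun y => f y * k (x - y)) ∧
      Integrable (fun x => ∫ y, f y * k (x - y)) ∧
      ∫ x, ∫ y, f y * k (x - y) = (∫ y, f y) * ∫ z, k z :=
  ⟨hf.ae_convolution_exists (ContinuousLinearMap.mul ℝ ℝ) hk,
    hf.integrable_convolution (ContinuousLinearMap.mul ℝ ℝ) hk,
    integral_convolution (ContinuousLinearMap.mul ℝ ℝ) hf hk⟩

lemma conv_continuous {f k : ℝ → ℝ} (hf : Integrable f) (hk : Continuous k) {B : ℝ}
    (hB : ∀ z, |k z| ≤ B) : Continuous (fun x => ∫ y, f y * k (x - y)) :=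
  BddAbove.continuous_convolution_right_of_integrable (ContinuousLinearMap.mul ℝ ℝ)
    ⟨B, by rintro _ ⟨z, rfl⟩; exact hB z⟩ hf hk

lemma integrable_mul_bdd {f k : ℝ → ℝ} (hf : Integrable f) (hk : Continuous k) {B : ℝ}
    (hB : ∀ z, |k z| ≤ B) (x : ℝ) : Integrable fun y => f y * k (x - y) :=
  hf.mul_bdd (c := B) (by fun_prop) (.of_forall fun y => hB _)

lemma gaussPdf_le {r : ℝ} (z : ℝ) : |gaussPdf r z| ≤ gaussPdf r 0 := by
  unfold gaussPdf
  rw [abs_of_nonneg (by positivity)]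
  refine div_le_div_of_nonneg_right (Real.exp_le_exp.2 ?_) (Real.sqrt_nonneg _)
  rw [neg_div, neg_div]
  have : 0 ≤ z ^ 2 / (2 * r ^ 2) := by positivity
  simpa using this

lemma gaussPdf_deriv_bdd {r : ℝ} (hr : 0 < r) (z : ℝ) :
    |-(z / r ^ 2) * gaussPdf r z| ≤ r⁻¹ * (1 / Real.sqrt (2 * Real.pi * r ^ 2)) := by
  unfold gaussPdf
  have h : |z / r| * Real.exp (-(z ^ 2) / (2 * r ^ 2)) ≤ 1 := by
    have e : -(z ^ 2) / (2 * r ^ 2) = -(|z / r| ^ 2 / 2) := by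
      rw [sq_abs]; field_simp
    rw [e, Real.exp_neg, ← div_eq_mul_inv, div_le_one (Real.exp_pos _)]
    have := Real.add_one_le_exp (|z / r| ^ 2 / 2)
    nlinarith [sq_nonneg (|z / r| - 1)]
  have e2 : -(z / r ^ 2) * (Real.exp (-(z ^ 2) / (2 * r ^ 2)) / Real.sqrt (2 * Real.pi * r ^ 2)) =
      -(r⁻¹ * (((z / r) * Real.exp (-(z ^ 2) / (2 * r ^ 2))) / Real.sqrt (2 * Real.pi * r ^ 2))) := by
    field_simp
  rw [e2, abs_neg, abs_mul, abs_of_pos (inv_pos.2 hr), abs_div, abs_mul, Real.abs_exp,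
    abs_of_nonneg (Real.sqrt_nonneg _)]
  gcongr

lemma smoothed_pos {f : ℝ → ℝ} {r : ℝ} (hf : IsDensity f) (hr : 0 < r) (x : ℝ) :
    0 < smoothed f r x := by
  obtain ⟨h0, hi, h1⟩ := hf
  have hn : 0 ≤ fun y => f y * gaussPdf r (x - y) := fun y =>
    mul_nonneg (h0 y) (gaussPdf_pos hr _).le
  refine lt_of_le_of_ne (integral_nonneg hn) fun h => ?_
  have := (integral_eq_zero_iff_of_nonneg hn
    (integrable_mul_bdd hi (continuous_gaussPdf r) gaussPdf_le x)).1 h.symm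
  have hz : f =ᵐ[volume] 0 := by
    filter_upwards [this] with y hy
    exact (mul_eq_zero.1 hy).resolve_right (gaussPdf_pos hr _).ne'
  rw [integral_congr_ae hz] at h1
  simp at h1

/-- The derivative of the smoothed density, obtained by differentiating the Gaussian kernel. -/
def smoothedDeriv (f : ℝ → ℝ) (r x : ℝ) : ℝ :=
  ∫ y, f y * (-((x - y) / r ^ 2) * gaussPdf r (x - y))

lemma hasDerivAt_smoothed {f : ℝ → ℝ} {r : ℝ} (hf : Integrable f) (hr : 0 < r) (x : ℝ) :
    HasDerivAt (smoothed f r) (smoothedDeriv f r x) x := by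
  have hc : Continuous fun z : ℝ => -(z / r ^ 2) * gaussPdf r z :=
    (by fun_prop : Continuous fun z : ℝ => -(z / r ^ 2)).mul (continuous_gaussPdf r)
  refine (hasDerivAt_integral_of_dominated_loc_of_deriv_le (μ := volume) (s := Set.univ)
    (F := fun x y => f y * gaussPdf r (x - y))
    (F' := fun x y => f y * (-((x - y) / r ^ 2) * gaussPdf r (x - y)))
    (bound := fun y => |f y| * (r⁻¹ * (1 / Real.sqrt (2 * Real.pi * r ^ 2))))
    Filter.univ_mem (.of_forall fun x => ?_) ?_ ?_ ?_ ?_ ?_).2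
  · exact (integrable_mul_bdd hf (continuous_gaussPdf r) gaussPdf_le x).aestronglyMeasurable
  · exact integrable_mul_bdd hf (continuous_gaussPdf r) gaussPdf_le x
  · exact (integrable_mul_bdd hf hc (gaussPdf_deriv_bdd hr) x).aestronglyMeasurable
  · refine .of_forall fun y x _ => ?_
    rw [norm_mul, Real.norm_eq_abs, Real.norm_eq_abs]
    gcongr
    exact gaussPdf_deriv_bdd hr _
  · exact hf.abs.mul_const _
  · refine .of_forall fun y x _ => ?_
    have := ((hasDerivAt_gaussPdf hr (x - y)).comp x ((hasDerivAt_id x).sub_const y)).const_mul (f y)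
    simpa using this

lemma continuous_smoothedDeriv {f : ℝ → ℝ} {r : ℝ} (hf : Integrable f) (hr : 0 < r) :
    Continuous (smoothedDeriv f r) :=
  conv_continuous hf ((by fun_prop : Continuous fun z : ℝ => -(z / r ^ 2)).mul
    (continuous_gaussPdf r)) (gaussPdf_deriv_bdd hr)

/-! ### Jensen and Cauchy–Schwarz -/

/-- Jensen's inequality for the posterior law of the noise given `X = x`: a kernel `g` applied to
the noise has posterior mean `G / f_r`, so `G² / f_r` integrates to at most `E[g(Z)²]`. -/
lemma sq_div_smoothed {f : ℝ → ℝ} {r : ℝ} (hf : IsDensity f) (hr : 0 < r) {g : ℝ → ℝ}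
    (hg : Continuous g) (h2 : Integrable (fun z => g z ^ 2 * gaussPdf r z)) :
    Integrable (fun x => (∫ y, f y * (g (x - y) * gaussPdf r (x - y))) ^ 2 / smoothed f r x) ∧
      ∫ x, (∫ y, f y * (g (x - y) * gaussPdf r (x - y))) ^ 2 / smoothed f r x ≤
        ∫ z, g z ^ 2 * gaussPdf r z := by
  obtain ⟨a1, b1, -⟩ := conv_facts hf.2.1 (kernel_integrable hr hg h2)
  obtain ⟨a2, b2, c2⟩ := conv_facts hf.2.1 h2
  obtain ⟨a0, b0, -⟩ := conv_facts hf.2.1 (integrable_gaussPdf hr)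
  rw [hf.2.2, one_mul] at c2
  have hle : ∀ᵐ x, (∫ y, f y * (g (x - y) * gaussPdf r (x - y))) ^ 2 / smoothed f r x ≤
      ∫ y, f y * (g (x - y) ^ 2 * gaussPdf r (x - y)) := by
    filter_upwards [a0, a1, a2] with x i0 i1 i2
    have hp := smoothed_pos hf hr x
    have hpe : smoothed f r x = ∫ y, f y * gaussPdf r (x - y) := rfl
    set G := ∫ y, f y * (g (x - y) * gaussPdf r (x - y)) with hG
    set p := smoothed f r x with hpdef
    -- expand the nonnegative posterior variance around the posterior mean `G / p`
    have key : 0 ≤ ∫ y, f y * ((g (x - y) - G / p) ^ 2 * gaussPdf r (x - y)) :=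
      integral_nonneg fun y => mul_nonneg (hf.1 y)
        (mul_nonneg (sq_nonneg _) (gaussPdf_pos hr _).le)
    have e : ∀ y, f y * ((g (x - y) - G / p) ^ 2 * gaussPdf r (x - y)) =
        (f y * (g (x - y) ^ 2 * gaussPdf r (x - y)) -
          2 * (G / p) * (f y * (g (x - y) * gaussPdf r (x - y)))) +
          (G / p) ^ 2 * (f y * gaussPdf r (x - y)) := fun y => by ring
    have j : Integrable fun y => f y * (g (x - y) ^ 2 * gaussPdf r (x - y)) -
        2 * (G / p) * (f y * (g (x - y) * gaussPdf r (x - y))) := i2.sub (i1.const_mul _)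
    simp only [e] at key
    rw [integral_add j (i0.const_mul _), integral_sub i2 (i1.const_mul _), integral_const_mul, integral_const_mul, ← hpe, ← hG] at key
    have e2 : G ^ 2 / p = 2 * (G / p) * G - (G / p) ^ 2 * p := by field_simp; ring
    linarith
  have hi : Integrable
      (fun x => (∫ y, f y * (g (x - y) * gaussPdf r (x - y))) ^ 2 / smoothed f r x) := by
    refine b2.mono' ?_ ?_
    · exact ((b1.aestronglyMeasurable.aemeasurable.pow_const 2).div
        b0.aestronglyMeasurable.aemeasurable).aestronglyMeasurable
    · filter_upwards [hle] with x hx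
      rwa [Real.norm_of_nonneg (div_nonneg (sq_nonneg _) (smoothed_pos hf hr x).le)]
  exact ⟨hi, (integral_mono_ae hi b2 hle).trans_eq c2⟩

/-- Cauchy–Schwarz in the space weighted by `1 / p`. -/
lemma weighted_cauchy_schwarz {p D q : ℝ → ℝ} (hp : ∀ x, 0 < p x) (hpm : Measurable p)
    (hD : AEStronglyMeasurable D volume) (hq : Measurable q)
    (h1 : Integrable fun x => D x ^ 2 / p x) (h2 : Integrable fun x => q x ^ 2 / p x) :
    Integrable (fun x => D x * (q x / p x)) ∧
      ∫ x, |D x * (q x / p x)| ≤ √(∫ x, D x ^ 2 / p x) * √(∫ x, q x ^ 2 / p x) := by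
  have hs : ∀ x, √(p x) ^ 2 = p x := fun x => Real.sq_sqrt (hp x).le
  have eD : ∀ x, (|D x| / √(p x)) ^ 2 = D x ^ 2 / p x := fun x => by rw [div_pow, hs, sq_abs]
  have eq : ∀ x, (|q x| / √(p x)) ^ 2 = q x ^ 2 / p x := fun x => by rw [div_pow, hs, sq_abs]
  have mD : AEStronglyMeasurable (fun x => |D x| / √(p x)) volume :=
    (hD.aemeasurable.abs.div hpm.sqrt.aemeasurable).aestronglyMeasurable
  have mq : AEStronglyMeasurable (fun x => |q x| / √(p x)) volume :=
    (hq.abs.div hpm.sqrt).aestronglyMeasurable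
  have LD : MemLp (fun x => |D x| / √(p x)) 2 volume := by
    rw [memLp_two_iff_integrable_sq mD]; simpa only [eD] using h1
  have Lq : MemLp (fun x => |q x| / √(p x)) 2 volume := by
    rw [memLp_two_iff_integrable_sq mq]; simpa only [eq] using h2
  have e : ∀ x, |D x * (q x / p x)| = (|D x| / √(p x)) * (|q x| / √(p x)) := fun x => by
    rw [abs_mul, abs_div, abs_of_pos (hp x), div_mul_div_comm, ← sq, hs]; ring
  constructor
  · refine (LD.integrable_mul Lq).mono' ?_ (.of_forall fun x => (e x).le)
    exact (hD.aemeasurable.mul (hq.div hpm).aemeasurable).aestronglyMeasurable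
  · have := integral_mul_le_Lp_mul_Lq_of_nonneg (μ := volume) (p := 2) (q := 2)
      (Real.holderConjugate_iff.2 (by norm_num))
      (f := fun x => |D x| / √(p x)) (g := fun x => |q x| / √(p x))
      (.of_forall fun x => by positivity) (.of_forall fun x => by positivity)
      (by simpa using LD) (by simpa using Lq)
    simp only [Real.rpow_two, eD, eq, ← Real.sqrt_eq_rpow] at this
    simpa only [e] using this

/-! ### The Taylor remainder of the Gaussian -/

lemma abs_exp_sub_one_sub_le (w : ℝ) : |Real.exp w - 1 - w| ≤ w ^ 2 * Real.exp |w| := by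
  have := Complex.norm_exp_sub_sum_le_norm_mul_exp (w : ℂ) 2
  simp only [Finset.sum_range_succ, Finset.sum_range_zero] at this
  have e : Complex.exp w - (0 + (w : ℂ) ^ 0 / ((0).factorial : ℂ) +
      (w : ℂ) ^ 1 / ((1).factorial : ℂ)) = ((Real.exp w - 1 - w : ℝ) : ℂ) := by
    push_cast; simp; ring
  rw [e, Complex.norm_real, Complex.norm_real, Real.norm_eq_abs, Real.norm_eq_abs, sq_abs] at this
  exact this

/-- Second-order bound for `φ_r(z + t) / φ_r(z) - 1 + t z / r²`, the relative Taylor remainder of the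
Gaussian density, written with `τ = t / r` and `ζ = z / r`. -/
lemma remainder_kernel_bound {τ ζ : ℝ} (h0 : 0 ≤ τ) (h1 : τ ≤ 1 / 2) :
    (Real.exp (-(τ * ζ + τ ^ 2 / 2)) - 1 + τ * ζ) ^ 2 ≤
      (9 * Real.exp 3 * τ ^ 4) * Real.exp (3 * |ζ|) := by
  set y := |ζ| + 1 with hy
  have hy1 : 1 ≤ y := by rw [hy]; linarith [abs_nonneg ζ]
  have hw : |-(τ * ζ + τ ^ 2 / 2)| ≤ τ * y := by
    rw [abs_neg, hy]
    refine (abs_add_le _ _).trans ?_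
    rw [abs_mul, abs_of_nonneg h0, abs_of_nonneg (by positivity : 0 ≤ τ ^ 2 / 2)]
    nlinarith
  set w := -(τ * ζ + τ ^ 2 / 2) with hwdef
  have hw2 : w ^ 2 ≤ τ ^ 2 * y ^ 2 := by
    rw [← mul_pow, ← sq_abs w]; gcongr
  have hyexp : y ^ 2 ≤ 2 * Real.exp y := by
    have := Real.quadratic_le_exp_of_nonneg (by linarith : 0 ≤ y); nlinarith
  have hE : |Real.exp w - 1 + τ * ζ| ≤ 3 * τ ^ 2 * Real.exp (3 / 2 * y) := by
    have e : Real.exp w - 1 + τ * ζ = (Real.exp w - 1 - w) - τ ^ 2 / 2 := by rw [hwdef]; ring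
    have k1 : Real.exp |w| ≤ Real.exp (y / 2) := Real.exp_le_exp.2 (by nlinarith)
    have k2 : w ^ 2 * Real.exp |w| ≤ τ ^ 2 * (2 * Real.exp y) * Real.exp (y / 2) := by
      gcongr
      exact hw2.trans (by gcongr)
    have k3 : Real.exp y * Real.exp (y / 2) = Real.exp (3 / 2 * y) := by
      rw [← Real.exp_add]; ring_nf
    have k4 : 1 ≤ Real.exp (3 / 2 * y) := Real.one_le_exp (by linarith)
    rw [e]
    refine (abs_sub _ _).trans ?_
    rw [abs_of_nonneg (by positivity : 0 ≤ τ ^ 2 / 2)]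
    have := abs_exp_sub_one_sub_le w
    have k5 : τ ^ 2 * (2 * Real.exp y) * Real.exp (y / 2) = 2 * τ ^ 2 * Real.exp (3 / 2 * y) := by
      rw [← k3]; ring
    nlinarith [sq_nonneg τ]
  rw [← sq_abs]
  calc _ ≤ (3 * τ ^ 2 * Real.exp (3 / 2 * y)) ^ 2 := by gcongr
    _ = _ := by
      have : Real.exp (3 / 2 * y) ^ 2 = Real.exp 3 * Real.exp (3 * |ζ|) := by
        rw [← Real.exp_nat_mul, ← Real.exp_add, hy]; congr 1; push_cast; ring
      rw [mul_pow, this]; ring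

/-! ### Expansion of the divergence -/

/-- The divergence from a shift is `∫₀^δ ∫ p(x + t) s(x) dx dt` with `s = p' / p`; replacing
`p(x + t)` by `p(x) + t p'(x)` gives exactly `δ² / 2` times the Fisher information, and each
slice errs by at most the bound `M` on the remainder. -/
lemma kl_shift_of_remainder {p p' : ℝ → ℝ} {δ M : ℝ} (hδ : 0 ≤ δ) (hp : ∀ x, 0 < p x)
    (hd : ∀ x, HasDerivAt p (p' x) x) (hc : Continuous p') (hi : Integrable p')
    (h0 : ∫ x, p' x = 0) (hI : Integrable fun x => p' x ^ 2 / p x)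
    (hD : ∀ t, 0 ≤ t → t ≤ δ → Integrable (fun x => (p (x + t) - p x - t * p' x) * (p' x / p x)) ∧
      ∫ x, |(p (x + t) - p x - t * p' x) * (p' x / p x)| ≤ M) :
    |(∫ x, p x * Real.log (p x / p (x - δ))) - δ ^ 2 / 2 * ∫ x, p' x ^ 2 / p x| ≤ M * δ := by
  have hpc : Continuous p := continuous_iff_continuousAt.2 fun x => (hd x).continuousAt
  have hsc : Continuous fun x => p' x / p x := hc.div hpc fun x => (hp x).ne'
  set D : ℝ → ℝ → ℝ := fun t x => (p (x + t) - p x - t * p' x) * (p' x / p x) with hDdef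
  set I := ∫ x, p' x ^ 2 / p x with hIdef
  have hDi : ∀ t, 0 ≤ t → t ≤ δ → Integrable (D t) := fun t h1 h2 => (hD t h1 h2).1
  have hDp : ∀ t, 0 ≤ t → t ≤ δ → Integrable (fun x => D t x + p' x) := fun t h1 h2 =>
    (hDi t h1 h2).add hi
  have hDa : ∀ t, 0 ≤ t → t ≤ δ → Integrable (fun x => |D t x|) := fun t h1 h2 => (hDi t h1 h2).abs
  have hDpa : ∀ t, 0 ≤ t → t ≤ δ → Integrable (fun x => |D t x| + |p' x|) := fun t h1 h2 =>
    (hDa t h1 h2).add hi.abs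
  have dec : ∀ t x, p (x + t) * (p' x / p x) = (D t x + p' x) + t * (p' x ^ 2 / p x) := by
    intro t x
    have := (hp x).ne'
    simp only [hDdef]; field_simp; ring
  have hInt : ∀ t, 0 ≤ t → t ≤ δ → Integrable (fun x => p (x + t) * (p' x / p x)) := by
    intro t h1 h2
    simp only [dec]
    exact (hDp t h1 h2).add (hI.const_mul t)
  have hIntS : ∀ t, 0 ≤ t → t ≤ δ → Integrable (fun x => p x * (p' (x - t) / p (x - t))) := by
    intro t h1 h2
    simpa using (hInt t h1 h2).comp_sub_right t
  have hS : ∀ t, 0 ≤ t → t ≤ δ → ∫ x, p x * (p' (x - t) / p (x - t)) = (∫ x, D t x) + t * I := by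
    intro t h1 h2
    have e : ∫ x, p x * (p' (x - t) / p (x - t)) = ∫ x, p (x + t) * (p' x / p x) := by
      rw [← integral_add_right_eq_self _ t]; simp
    rw [e]
    simp only [dec]
    rw [integral_add (hDp t h1 h2) (hI.const_mul t), integral_add (hDi t h1 h2) hi, h0,
      integral_const_mul, add_zero]
  have hmem : ∀ t ∈ Set.uIoc 0 δ, 0 ≤ t ∧ t ≤ δ := by
    intro t ht; rw [Set.uIoc_of_le hδ] at ht; exact ⟨ht.1.le, ht.2⟩
  have hcF : Continuous (Function.uncurry fun t x => p x * (p' (x - t) / p (x - t))) :=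
    (hpc.comp continuous_snd).mul (hsc.comp (continuous_snd.sub continuous_fst))
  have hFub : Integrable (Function.uncurry fun t x => p x * (p' (x - t) / p (x - t)))
      ((volume.restrict (Set.uIoc 0 δ)).prod volume) := by
    have hm := hcF.aestronglyMeasurable (μ := (volume.restrict (Set.uIoc 0 δ)).prod volume)
    refine (integrable_prod_iff hm).2 ⟨?_, ?_⟩
    · refine ae_restrict_of_forall_mem measurableSet_uIoc fun t ht => ?_
      exact hIntS t (hmem t ht).1 (hmem t ht).2
    · have hfin : Integrable (fun _ : ℝ => M + (∫ x, |p' x|) + δ * I)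
          (volume.restrict (Set.uIoc 0 δ)) := by
        rw [Set.uIoc_of_le hδ]; exact integrable_const _
      refine hfin.mono' hm.norm.integral_prod_right' ?_
      refine ae_restrict_of_forall_mem measurableSet_uIoc fun t ht => ?_
      obtain ⟨t0, t1⟩ := hmem t ht
      rw [Real.norm_of_nonneg (integral_nonneg fun _ => norm_nonneg _)]
      simp only [Function.uncurry]
      have e : ∫ x, ‖p x * (p' (x - t) / p (x - t))‖ = ∫ x, |p (x + t) * (p' x / p x)| := by
        rw [← integral_add_right_eq_self _ t]; simp only [add_sub_cancel_right, Real.norm_eq_abs]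
      rw [e]
      have hI0 : ∀ x, 0 ≤ p' x ^ 2 / p x := fun x => div_nonneg (sq_nonneg _) (hp x).le
      calc ∫ x, |p (x + t) * (p' x / p x)|
          ≤ ∫ x, ((|D t x| + |p' x|) + t * (p' x ^ 2 / p x)) := by
            refine integral_mono (hInt t t0 t1).abs
              ((hDpa t t0 t1).add (hI.const_mul t)) fun x => ?_
            simp only [dec]
            refine (abs_add_le _ _).trans ?_
            rw [abs_of_nonneg (mul_nonneg t0 (hI0 x))]
            gcongr
            exact abs_add_le _ _
        _ = (∫ x, |D t x|) + (∫ x, |p' x|) + t * I := by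
            rw [integral_add (hDpa t t0 t1) (hI.const_mul t), integral_add (hDa t t0 t1) hi.abs, integral_const_mul]
        _ ≤ _ := by
            have : 0 ≤ I := integral_nonneg hI0
            have := (hD t t0 t1).2
            gcongr
  have hlog : ∀ x, p x * Real.log (p x / p (x - δ)) =
      ∫ t in (0 : ℝ)..δ, p x * (p' (x - t) / p (x - t)) := by
    intro x
    have h1 := intervalIntegral.integral_eq_sub_of_hasDerivAt (a := 0) (b := δ)
      (f := fun t => -Real.log (p (x - t))) (f' := fun t => p' (x - t) / p (x - t))
      (fun t _ => by
        have := (((hd (x - t)).comp t ((hasDerivAt_id t).const_sub x)).log (hp _).ne').neg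
        refine this.congr_deriv ?_
        simp [neg_div])
      ((hsc.comp (by fun_prop : Continuous fun t : ℝ => x - t)).intervalIntegrable _ _)
    rw [intervalIntegral.integral_const_mul, h1, Real.log_div (hp _).ne' (hp _).ne']
    simp only [sub_zero]; ring
  have hKL : ∫ x, p x * Real.log (p x / p (x - δ)) =
      ∫ t in (0 : ℝ)..δ, ∫ x, p x * (p' (x - t) / p (x - t)) := by
    simp only [hlog]
    exact (intervalIntegral_integral_swap hFub).symm
  have hSi : IntervalIntegrable (fun t => ∫ x, p x * (p' (x - t) / p (x - t))) volume 0 δ := by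
    rw [intervalIntegrable_iff]; exact hFub.integral_prod_left
  have hlin : ∫ t in (0 : ℝ)..δ, t * I = δ ^ 2 / 2 * I := by
    rw [intervalIntegral.integral_mul_const, integral_id]; ring
  rw [hKL, ← hlin, ← intervalIntegral.integral_sub hSi
    ((by fun_prop : Continuous fun t : ℝ => t * I).intervalIntegrable _ _)]
  have := intervalIntegral.norm_integral_le_of_norm_le_const (a := 0) (b := δ) (C := M)
    (f := fun t => (∫ x, p x * (p' (x - t) / p (x - t))) - t * I) (fun t ht => by
      obtain ⟨t0, t1⟩ := hmem t ht
      rw [hS t t0 t1, add_sub_cancel_right]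
      exact (norm_integral_le_integral_norm _).trans (hD t t0 t1).2)
  rwa [sub_zero, abs_of_nonneg hδ] at this

/-! ### The bound for smoothed densities -/

lemma fisherInfo_eq {f : ℝ → ℝ} {r : ℝ} (hf : IsDensity f) (hr : 0 < r) :
    fisherInfo f r = ∫ x, smoothedDeriv f r x ^ 2 / smoothed f r x := by
  unfold fisherInfo score
  congr 1; ext x
  have h : deriv (fun t => smoothed f r t) x = smoothedDeriv f r x :=
    (hasDerivAt_smoothed hf.2.1 hr x).deriv
  have := (smoothed_pos hf hr x).ne'
  rw [h]; field_simp

lemma score_kernel_bound {r : ℝ} (hr : 0 < r) (z : ℝ) :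
    (-(z / r ^ 2)) ^ 2 ≤ (2 / r ^ 2) * Real.exp (3 * |z / r|) := by
  have h := Real.quadratic_le_exp_of_nonneg (abs_nonneg (z / r))
  have h2 : Real.exp |z / r| ≤ Real.exp (3 * |z / r|) :=
    Real.exp_le_exp.2 (by linarith [abs_nonneg (z / r)])
  have e : (-(z / r ^ 2)) ^ 2 = |z / r| ^ 2 / r ^ 2 := by rw [sq_abs]; field_simp
  rw [e, div_mul_eq_mul_div]
  gcongr
  linarith [abs_nonneg (z / r)]

/-- The first-order Taylor remainder of `f_r` comes from that of the Gaussian kernel. -/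
lemma smoothed_remainder_eq {f : ℝ → ℝ} {r : ℝ} (hf : IsDensity f) (hr : 0 < r) (t x : ℝ) :
    smoothed f r (x + t) - smoothed f r x - t * smoothedDeriv f r x =
      ∫ y, f y * ((Real.exp (-((t / r) * ((x - y) / r) + (t / r) ^ 2 / 2)) - 1 +
        (t / r) * ((x - y) / r)) * gaussPdf r (x - y)) := by
  have hc : Continuous fun z : ℝ => -(z / r ^ 2) * gaussPdf r z :=
    (by fun_prop : Continuous fun z : ℝ => -(z / r ^ 2)).mul (continuous_gaussPdf r)
  have i1 := integrable_mul_bdd hf.2.1 (continuous_gaussPdf r) gaussPdf_le (x + t)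
  have i2 := integrable_mul_bdd hf.2.1 (continuous_gaussPdf r) gaussPdf_le x
  have i3 := integrable_mul_bdd hf.2.1 hc (gaussPdf_deriv_bdd hr) x
  have i4 : Integrable fun y => f y * gaussPdf r (x + t - y) - f y * gaussPdf r (x - y) :=
    i1.sub i2
  unfold smoothed smoothedDeriv
  rw [← integral_const_mul, ← integral_sub i1 i2, ← integral_sub i4 (i3.const_mul t)]
  congr 1; ext y
  have e : x + t - y = (x - y) + t := by ring
  have e2 : -(t * (x - y) + t ^ 2 / 2) / r ^ 2 =
      -((t / r) * ((x - y) / r) + (t / r) ^ 2 / 2) := by field_simp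
  rw [e, gaussPdf_add hr, e2]
  field_simp
  ring

/-- There is a universal constant `C > 0` such that for `0 < ε < r/4`,
`|KL(f_r ‖ f_r^{2ε}) − 2ε²I_r| ≤ C·√I_r·ε³/r²`, where `f_r^{2ε}(x) = f_r(x − 2ε)`. -/
theorem kl_shifted_smoothed_bound :
    ∃ C : ℝ, 0 < C ∧ ∀ (f : ℝ → ℝ) (r : ℝ), IsDensity f → 0 < r →
      ∀ ε : ℝ, 0 < ε → ε < r / 4 →
      |KLdiv (fun x => smoothed f r x) (fun x => smoothed f r (x - 2 * ε)) -
          2 * ε ^ 2 * fisherInfo f r| ≤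
        C * Real.sqrt (fisherInfo f r) * ε ^ 3 / r ^ 2 := by
  set K := 9 * Real.exp 3 * ∫ z, Real.exp (3 * |z|) * gaussPdf 1 z with hK
  refine ⟨8 * √K + 1, by positivity, fun f r hf hr ε hε hεr => ?_⟩
  have hsk : Continuous fun z : ℝ => -(z / r ^ 2) := by fun_prop
  obtain ⟨s2, -⟩ := kernel_sq hr hsk (score_kernel_bound hr)
  have s1 := kernel_integrable hr hsk s2
  have hFI := (sq_div_smoothed hf hr hsk s2).1
  obtain ⟨-, hpi, hp0⟩ := conv_facts hf.2.1 s1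
  rw [integral_eq_zero_of_hasDerivAt_of_integrable (hasDerivAt_gaussPdf hr) s1
    (integrable_gaussPdf hr), mul_zero] at hp0
  have hpc : Continuous (smoothed f r) :=
    continuous_iff_continuousAt.2 fun x => (hasDerivAt_smoothed hf.2.1 hr x).continuousAt
  have hp'c := continuous_smoothedDeriv hf.2.1 hr
  set J := fisherInfo f r with hJ
  have hJe := fisherInfo_eq hf hr
  have hmain := kl_shift_of_remainder (p := smoothed f r) (p' := smoothedDeriv f r)
    (δ := 2 * ε) (M := √K * ((2 * ε) / r) ^ 2 * √J) (by positivity) (smoothed_pos hf hr)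
    (hasDerivAt_smoothed hf.2.1 hr) hp'c hpi hp0 hFI (fun t t0 t1 => by
      have hτ0 : 0 ≤ t / r := by positivity
      have hτ : t / r ≤ 1 / 2 := by rw [div_le_iff₀ hr]; linarith
      have hgc : Continuous fun z : ℝ =>
          Real.exp (-((t / r) * (z / r) + (t / r) ^ 2 / 2)) - 1 + (t / r) * (z / r) := by fun_prop
      obtain ⟨g2, gle⟩ := kernel_sq hr hgc
        (fun z => remainder_kernel_bound (ζ := z / r) hτ0 hτ)
      obtain ⟨D2, Dle⟩ := sq_div_smoothed hf hr hgc g2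
      simp only [← smoothed_remainder_eq hf hr] at D2 Dle
      have hDc : Continuous fun x =>
          smoothed f r (x + t) - smoothed f r x - t * smoothedDeriv f r x := by fun_prop
      obtain ⟨c1, c2⟩ := weighted_cauchy_schwarz (smoothed_pos hf hr) hpc.measurable
        hDc.aestronglyMeasurable hp'c.measurable D2 hFI
      refine ⟨c1, c2.trans ?_⟩
      rw [hJ, hJe]
      refine mul_le_mul_of_nonneg_right ?_ (Real.sqrt_nonneg _)
      have hb : (∫ x, (smoothed f r (x + t) - smoothed f r x - t * smoothedDeriv f r x) ^ 2 /
          smoothed f r x) ≤ K * ((t / r) ^ 2) ^ 2 :=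
        (Dle.trans gle).trans_eq (by rw [hK]; ring)
      calc _ ≤ √(K * ((t / r) ^ 2) ^ 2) := Real.sqrt_le_sqrt hb
        _ = √K * (t / r) ^ 2 := by
          rw [Real.sqrt_mul' _ (by positivity), Real.sqrt_sq (by positivity)]
        _ ≤ _ := by gcongr)
  rw [← hJe, ← hJ] at hmain
  have e1 : (2 * ε) ^ 2 / 2 * J = 2 * ε ^ 2 * J := by ring
  rw [e1] at hmain
  refine le_trans hmain ?_
  have e2 : √K * (2 * ε / r) ^ 2 * √J * (2 * ε) = 8 * √K * √J * ε ^ 3 / r ^ 2 := by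
    field_simp; ring
  rw [e2]
  gcongr
  linarith

end
end

section
/- There is a universal constant C > 0 such that for every integer k ≥ 3 and every ε with 0 < ε ≤ r: letting γ(x) = log(f_r^{2ε}(x)/f_r(x)) be the log-likelihood ratio, one has E_{x~f_r}[|γ(x)|^k] ≤ (k!/2)·(30ε/r)^{k−2}·4·ε²·I_r·(1 + C·(ε/r)·√(log(1/(r²·I_r)))). -/
/-!
In the variable `x / r` the smoothed density is `exp g` with `g x + x ^ 2 / 2` convex: up to a
constant this function is a cumulant generating function (`exists_log_smoothed`). Hence, with
`s = g'`, the score decreases at rate at most `1`, and `g y ≥ g x + s x (y - x) - (y - x) ^ 2 / 2`.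

Let `T = 2ε / r ≤ 2` and `v x = |g (x - T) - g x| / T`. Since
`v ^ (k - 2) ≤ (k! / 2) * 15 ^ (k - 2) * exp (v / 2) / 61` for all `k ≥ 3`
(`pow_le_factorial_mul_exp`), it suffices to show
`∫ v ^ 2 * exp (v / 2) * exp g ≤ 61 * ∫ q`, where `q = s ^ 2 * exp g` is the integrand of the Fisher
information. This is a pointwise bound of the left integrand by averages and translates of `q`
(`pointwise_bound`). Let `z` be the endpoint of `[x - T, x]` at which `g` is larger, and `σ` the
score at `z` in the direction pointing out of the interval. The tangent inequality gives
`v x ≤ σ + 1`.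

* If `σ ≤ 2 / 5`, then `v` is bounded and `exp g` on `[x - T, x]` is at least a constant times its
  value at `x`, so Cauchy–Schwarz bounds `v ^ 2 * exp g` by an average of `q` over the interval
  (`sq_increment_bound`).
* If `2 / 5 ≤ σ ≤ 4`, then `(σ + 1) ^ 2 * exp ((σ + 1) / 2)` is at most a constant times `σ ^ 2`.
* If `4 ≤ σ`, then one unit further out `exp g` is larger by a factor `exp (σ - 1 / 2)` while the
  score is still at least `σ - 1`, which beats the factor `exp ((σ + 1) / 2)` (`transport_bound`).

The numerical constants add up to `33.2 + 24.72 + 2 * 1.03 < 61`. No logarithmic term is needed, so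
any `C > 0` works; the proof takes `C = 1`.
-/

open MeasureTheory Real

noncomputable section

/-! ### The smoothed log-density -/

/-- The smoothed density is positive and, in the rescaled variable `x / r`, its logarithm `g` is
`C¹` and becomes convex once `x ^ 2 / 2` is added: up to a constant, `g x + x ^ 2 / 2` is the
cumulant generating function of `y / r` under the measure with density
`f y * exp (-y ^ 2 / (2 r ^ 2))`. -/
lemma exists_log_smoothed {f : ℝ → ℝ} {r : ℝ} (hf : IsDensity f) (hr : 0 < r) :
    ∃ g s : ℝ → ℝ, (∀ x, HasDerivAt g (s x) x) ∧ Continuous s ∧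
      Monotone (fun x => s x + x) ∧ ∀ x, smoothed f r (r * x) = exp (g x) := by
  obtain ⟨hf0, hfi, hf1⟩ := hf
  set w : ℝ → ℝ := fun y => f y * exp (-(y ^ 2) / (2 * r ^ 2)) with hw
  have hw0 : ∀ y, 0 ≤ w y := fun y => mul_nonneg (hf0 y) (exp_pos _).le
  have hwm : AEMeasurable (fun y => ENNReal.ofReal (w y)) volume := by
    refine AEMeasurable.ennreal_ofReal (hfi.aemeasurable.mul ?_)
    exact Measurable.aemeasurable (by fun_prop)
  set μ : Measure ℝ := volume.withDensity (fun y => ENNReal.ofReal (w y)) with hμ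
  set X : ℝ → ℝ := fun y => y / r with hX
  have hlt : ∀ᵐ y ∂(volume : Measure ℝ), ENNReal.ofReal (w y) < ⊤ :=
    Filter.Eventually.of_forall fun y => ENNReal.ofReal_lt_top
  have hwint : ∀ t, Integrable (fun y => w y * exp (t * X y)) := by
    intro t
    have hsq : ∀ y, w y * exp (t * X y)
        = f y * exp (t ^ 2 / 2 - (y / r - t) ^ 2 / 2) := by
      intro y
      simp only [hw, hX]
      rw [mul_assoc, ← exp_add]
      congr 2
      field_simp
      ring
    simp_rw [hsq]
    refine hfi.mul_bdd (c := exp (t ^ 2 / 2)) ?_ ?_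
    · exact (Measurable.aestronglyMeasurable (by fun_prop))
    · refine Filter.Eventually.of_forall fun y => ?_
      rw [norm_eq_abs, abs_of_pos (exp_pos _)]
      exact exp_le_exp.2 (by nlinarith [sq_nonneg (y / r - t)])
  have hint : ∀ t, Integrable (fun y => exp (t * X y)) μ := by
    intro t
    rw [hμ, integrable_withDensity_iff_integrable_smul₀' hwm hlt]
    simpa [ENNReal.toReal_ofReal (hw0 _)] using hwint t
  have hmgf : ∀ t, ProbabilityTheory.mgf X μ t = ∫ y, w y * exp (t * X y) := by
    intro t
    rw [ProbabilityTheory.mgf, hμ, integral_withDensity_eq_integral_toReal_smul₀ hwm hlt]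
    simp [ENNReal.toReal_ofReal (hw0 _)]
  have hμ0 : μ ≠ 0 := by
    rw [hμ, Ne, withDensity_eq_zero_iff hwm]
    intro h
    have : f =ᵐ[volume] 0 := by
      filter_upwards [h] with y hy
      have h1 : w y ≤ 0 := by simpa using hy
      have h2 : f y ≤ 0 := by
        by_contra hc
        exact absurd (mul_pos (not_le.1 hc) (exp_pos (-(y ^ 2) / (2 * r ^ 2)))) (not_lt.2 h1)
      exact le_antisymm h2 (hf0 y)
    rw [integral_congr_ae this] at hf1
    simp at hf1
  have : NeZero μ := ⟨hμ0⟩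
  have hset : interior (ProbabilityTheory.integrableExpSet X μ) = Set.univ := by
    have : ProbabilityTheory.integrableExpSet X μ = Set.univ := Set.eq_univ_of_forall hint
    rw [this, interior_univ]
  set c : ℝ → ℝ := ProbabilityTheory.cgf X μ with hc
  have han : ∀ x, AnalyticAt ℝ c x := fun x =>
    ProbabilityTheory.analyticAt_cgf (by rw [hset]; trivial)
  have hd : ∀ x, HasDerivAt c (deriv c x) x := fun x => (han x).differentiableAt.hasDerivAt
  have hd' : Differentiable ℝ (deriv c) := fun x => (han x).deriv.differentiableAt
  have hmono : Monotone (deriv c) := by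
    refine monotone_of_deriv_nonneg hd' fun x => ?_
    have h2 := ProbabilityTheory.variance_tilted_mul (X := X) (μ := μ) (t := x)
      (by rw [hset]; trivial)
    rw [iteratedDeriv_succ, iteratedDeriv_one] at h2
    rw [← h2]
    exact ProbabilityTheory.variance_nonneg _ _
  have hN : 0 < √(2 * π * r ^ 2) := Real.sqrt_pos.2 (by positivity)
  refine ⟨fun x => c x - x ^ 2 / 2 - log √(2 * π * r ^ 2), fun x => deriv c x - x, ?_, ?_, ?_, ?_⟩
  · intro x
    have := ((hd x).sub (((hasDerivAt_id x).pow 2).div_const 2)).sub_const (log √(2 * π * r ^ 2))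
    refine this.congr_deriv ?_
    simp
  · exact hd'.continuous.sub continuous_id
  · simpa using hmono
  · intro x
    rw [exp_sub, exp_sub, exp_log hN, hc, ProbabilityTheory.exp_cgf (hint x), hmgf, smoothed,
      ← integral_div, ← integral_div]
    refine integral_congr_ae (Filter.Eventually.of_forall fun y => ?_)
    simp only [gaussPdf, hw, hX]
    have h : exp (-(r * x - y) ^ 2 / (2 * r ^ 2))
        = exp (-y ^ 2 / (2 * r ^ 2)) * exp (x * (y / r)) / exp (x ^ 2 / 2) := by
      rw [← exp_add, ← exp_sub]
      congr 1
      field_simp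
      ring
    rw [h]
    ring

/-! ### Scalar inequalities -/

/-- Reduces all moments of order at least three to one exponentially weighted second moment. The
constant `61` is limited by `m = 1`, where `v ≤ (2 / e) * exp (v / 2)`. -/
lemma pow_le_factorial_mul_exp {v : ℝ} (hv : 0 ≤ v) {m : ℕ} (hm : 1 ≤ m) :
    v ^ m ≤ ((m + 2).factorial : ℝ) / 2 * 15 ^ m / 61 * exp (v / 2) := by
  rcases hm.eq_or_lt with rfl | hm
  · have h1 : v / 2 ≤ exp (v / 2 - 1) := by linarith [add_one_le_exp (v / 2 - 1)]
    rw [exp_sub, le_div_iff₀ (exp_pos _)] at h1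
    have h2 := exp_one_gt_d9
    norm_num [Nat.factorial]
    nlinarith
  · have h1 := pow_div_factorial_le_exp (v / 2) (by positivity) m
    have hfac : (0 : ℝ) < m.factorial := by positivity
    rw [div_le_iff₀ hfac, div_pow, div_le_iff₀ (by positivity)] at h1
    refine h1.trans ?_
    have hf : ((m + 2).factorial : ℝ) = (m + 2) * (m + 1) * m.factorial := by
      rw [Nat.factorial_succ, Nat.factorial_succ]; push_cast; ring
    have h15 : (15 : ℝ) ^ m = (15 / 2) ^ m * 2 ^ m := by rw [← mul_pow]; norm_num
    have h3 : ((15 : ℝ) / 2) ^ 2 ≤ (15 / 2) ^ m := pow_le_pow_right₀ (by norm_num) hm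
    have hm' : (2 : ℝ) ≤ m := by exact_mod_cast hm
    have h4 : (1 : ℝ) ≤ (m + 2) * (m + 1) / 2 * (15 / 2) ^ m / 61 := by
      have h5 : (6 : ℝ) ≤ (m + 2) * (m + 1) / 2 := by nlinarith
      have := mul_le_mul h5 h3 (by norm_num) (by positivity)
      linarith
    rw [hf, h15]
    calc exp (v / 2) * m.factorial * 2 ^ m = 1 * (exp (v / 2) * m.factorial * 2 ^ m) := by ring
      _ ≤ ((m + 2) * (m + 1) / 2 * (15 / 2) ^ m / 61) * (exp (v / 2) * m.factorial * 2 ^ m) := by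
        gcongr
      _ = _ := by ring

lemma exp_seven_le : exp 7 ≤ 1097 := by
  have h : exp 7 = exp 1 ^ 7 := by rw [← exp_nat_mul]; norm_num
  rw [h]
  calc exp 1 ^ 7 ≤ (2.7182818286 : ℝ) ^ 7 := by
        gcongr
        exact exp_one_lt_d9.le
    _ ≤ 1097 := by norm_num

lemma exp_seven_halves_le : exp (7 / 2) ≤ 33.2 := by
  refine le_of_sq_le_sq ?_ (by norm_num)
  rw [← exp_nat_mul]
  norm_num
  linarith [exp_seven_le]

lemma sq_mul_exp_le_mid {M : ℝ} (h1 : 2 / 5 ≤ M) (h2 : M ≤ 4) :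
    (M + 1) ^ 2 * exp ((M + 1) / 2) ≤ 24.72 * M ^ 2 := by
  have ha : exp (7 / 20) ≤ 1.4195 := by
    refine le_of_pow_le_pow_left₀ (n := 20) (by norm_num) (by norm_num) ?_
    rw [← exp_nat_mul]
    norm_num
    linarith [exp_seven_le]
  have hb : exp (5 / 4) ≤ 3.5 := by
    refine le_of_pow_le_pow_left₀ (n := 4) (by norm_num) (by norm_num) ?_
    have h : exp (5 / 4) ^ 4 = exp 1 ^ 5 := by
      rw [← exp_nat_mul, ← exp_nat_mul]; norm_num
    rw [h]
    calc exp 1 ^ 5 ≤ (2.7182818286 : ℝ) ^ 5 := by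
          gcongr
          exact exp_one_lt_d9.le
      _ ≤ 3.5 ^ 4 := by norm_num
  -- On this interval `exp ((M + 1) / 4)` lies below its chord.
  have hα : 0 ≤ (4 - M) * (5 / 18) := by linarith
  have hβ : 0 ≤ (M - 2 / 5) * (5 / 18) := by linarith
  have hch : exp ((M + 1) / 4)
      ≤ (4 - M) * (5 / 18) * (2839 / 2000) + (M - 2 / 5) * (5 / 18) * (7 / 2) := by
    have := convexOn_exp.2 (Set.mem_univ (7 / 20 : ℝ)) (Set.mem_univ (5 / 4 : ℝ)) hα hβ (by ring)
    simp only [smul_eq_mul] at this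
    have he : (4 - M) * (5 / 18) * (7 / 20) + (M - 2 / 5) * (5 / 18) * (5 / 4) = (M + 1) / 4 := by
      ring
    rw [he] at this
    refine this.trans (add_le_add ?_ ?_)
    · exact mul_le_mul_of_nonneg_left (ha.trans (by norm_num)) hα
    · exact mul_le_mul_of_nonneg_left (hb.trans (by norm_num)) hβ
  have hlin : (M + 1) * exp ((M + 1) / 4) ≤ 4.97 * M := by
    refine (mul_le_mul_of_nonneg_left hch (by linarith)).trans ?_
    norm_num
    nlinarith [mul_nonneg (sub_nonneg.2 h1) (sub_nonneg.2 h2)]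
  have he : exp ((M + 1) / 2) = exp ((M + 1) / 4) ^ 2 := by
    rw [← exp_nat_mul]; congr 1; push_cast; ring
  rw [he, ← mul_pow]
  refine (pow_le_pow_left₀ (by positivity) hlin 2).trans ?_
  nlinarith [sq_nonneg M]

lemma sq_mul_exp_le_tail {M : ℝ} (h : 4 ≤ M) :
    (M + 1) ^ 2 * exp ((M + 1) / 2) ≤ 1.03 * (M - 1) ^ 2 * exp (M - 1 / 2) := by
  have h1 : exp ((M + 1) / 2) = exp (1 - M / 2) * exp (M - 1 / 2) := by
    rw [← exp_add]; congr 1; ring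
  have h2 : exp (1 - M / 2) ≤ 0.37 := by
    refine (exp_le_exp.2 (by linarith : 1 - M / 2 ≤ -1)).trans ?_
    rw [exp_neg]
    have := exp_one_gt_d9
    rw [inv_le_comm₀ (exp_pos _) (by norm_num)]
    norm_num
    linarith
  rw [h1, ← mul_assoc]
  refine mul_le_mul_of_nonneg_right ?_ (exp_pos _).le
  refine (mul_le_mul_of_nonneg_left h2 (by positivity)).trans ?_
  nlinarith

/-- Here `M` and `a` stand for the size of the score and the log-density at a point, `M'` and `b`
for the score and the log-density one unit further uphill. The first term on the right suffices
for `M ≤ 4`, the second one for `M ≥ 4`. -/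
lemma transport_bound {M M' a b : ℝ} (hM : 2 / 5 ≤ M) (hM' : M - 1 ≤ M')
    (hb : a + M - 1 / 2 ≤ b) :
    (M + 1) ^ 2 * exp ((M + 1) / 2) * exp a
      ≤ 24.72 * (M ^ 2 * exp a) + 1.03 * (M' ^ 2 * exp b) := by
  rcases le_total M 4 with h | h
  · have := mul_le_mul_of_nonneg_right (sq_mul_exp_le_mid hM h) (exp_pos a).le
    have h2 : 0 ≤ M' ^ 2 * exp b := by positivity
    nlinarith
  · have h1 := mul_le_mul_of_nonneg_right (sq_mul_exp_le_tail h) (exp_pos a).le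
    have h2 : exp (M - 1 / 2) * exp a ≤ exp b := by
      rw [← exp_add]; exact exp_le_exp.2 (by linarith)
    have h3 : (M - 1) ^ 2 ≤ M' ^ 2 := pow_le_pow_left₀ (by linarith) hM' 2
    have h4 : (M - 1) ^ 2 * (exp (M - 1 / 2) * exp a) ≤ M' ^ 2 * exp b :=
      mul_le_mul h3 h2 (by positivity) (by positivity)
    have h5 : 0 ≤ M ^ 2 * exp a := by positivity
    nlinarith

/-! ### Pointwise estimates -/

/-- The tangent-line inequality for the convex function `g x + x ^ 2 / 2`. -/
lemma tangent_bound {g s : ℝ → ℝ} (hg : ∀ x, HasDerivAt g (s x) x)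
    (hmono : Monotone (fun x => s x + x)) (x y : ℝ) :
    g x + s x * (y - x) - (y - x) ^ 2 / 2 ≤ g y := by
  set φ : ℝ → ℝ := fun x => g x + x ^ 2 / 2 with hφ
  have hd : ∀ x, HasDerivAt φ (s x + x) x := by
    intro x
    have := (hg x).add (((hasDerivAt_id x).pow 2).div_const 2)
    refine this.congr_deriv ?_
    simp
  have hder : deriv φ = fun x => s x + x := funext fun x => (hd x).deriv
  have hconv : ConvexOn ℝ Set.univ φ :=
    Monotone.convexOn_univ_of_deriv (fun x => (hd x).differentiableAt) (hder ▸ hmono)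
  have key : φ x + (s x + x) * (y - x) ≤ φ y := by
    rcases lt_trichotomy x y with h | h | h
    · have := hconv.le_slope_of_hasDerivAt (Set.mem_univ x) (Set.mem_univ y) h (hd x)
      rw [slope_def_field, le_div_iff₀ (sub_pos.2 h)] at this
      linarith
    · simp [h]
    · have := hconv.slope_le_of_hasDerivAt (Set.mem_univ y) (Set.mem_univ x) h (hd x)
      rw [slope_def_field, div_le_iff₀ (sub_pos.2 h)] at this
      linarith
  simp only [hφ] at key
  nlinarith

/-- Cauchy–Schwarz on `[0, T]`, weighted by values of `exp g` that are at least
`exp (-14 / 5)` times the one at `x`. -/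
lemma sq_increment_bound {g s : ℝ → ℝ} (hg : ∀ x, HasDerivAt g (s x) x) (hs : Continuous s)
    {T x : ℝ} (hT : 0 < T) (hx : ∀ u ∈ Set.Icc 0 T, g x - 14 / 5 ≤ g (x - u)) :
    (|g (x - T) - g x| / T) ^ 2 * exp (g x)
      ≤ exp (14 / 5) * (1 / T * ∫ u in (0 : ℝ)..T, s (x - u) ^ 2 * exp (g (x - u))) := by
  have hgc : Continuous g := continuous_iff_continuousAt.2 fun x => (hg x).continuousAt
  have hsu : Continuous fun u => s (x - u) := hs.comp (by fun_prop)
  have hgu : Continuous fun u => g (x - u) := hgc.comp (by fun_prop)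
  have hftc : ∫ u in (0 : ℝ)..T, s (x - u) = g x - g (x - T) := by
    rw [intervalIntegral.integral_comp_sub_left (fun y => s y), sub_zero]
    exact intervalIntegral.integral_eq_sub_of_hasDerivAt (fun y _ => hg y)
      (hs.intervalIntegrable _ _)
  set m : ℝ := (g x - g (x - T)) / T with hm
  have hcs : m ^ 2 * T ≤ ∫ u in (0 : ℝ)..T, s (x - u) ^ 2 := by
    have h1 : ∫ u in (0 : ℝ)..T, (2 * m * s (x - u) - m ^ 2) = m ^ 2 * T := by
      have hi : IntervalIntegrable (fun u => 2 * m * s (x - u)) volume 0 T :=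
        (continuous_const.mul hsu).intervalIntegrable _ _
      rw [intervalIntegral.integral_sub hi (continuous_const.intervalIntegrable _ _),
        intervalIntegral.integral_const_mul, hftc, intervalIntegral.integral_const, hm]
      simp only [smul_eq_mul, sub_zero]
      field_simp
      ring
    rw [← h1]
    refine intervalIntegral.integral_mono_on hT.le
      (((continuous_const.mul hsu).sub continuous_const).intervalIntegrable _ _)
      ((hsu.pow 2).intervalIntegrable _ _) fun u _ => ?_
    nlinarith [sq_nonneg (s (x - u) - m)]
  have hw : (∫ u in (0 : ℝ)..T, s (x - u) ^ 2) * exp (g x)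
      ≤ exp (14 / 5) * ∫ u in (0 : ℝ)..T, s (x - u) ^ 2 * exp (g (x - u)) := by
    rw [← intervalIntegral.integral_mul_const, ← intervalIntegral.integral_const_mul]
    refine intervalIntegral.integral_mono_on hT.le
      (((hsu.pow 2).mul continuous_const).intervalIntegrable _ _)
      ((continuous_const.mul ((hsu.pow 2).mul (continuous_exp.comp hgu))).intervalIntegrable _ _)
      fun u hu => ?_
    have h1 : exp (g x) ≤ exp (14 / 5) * exp (g (x - u)) := by
      rw [← exp_add]; exact exp_le_exp.2 (by linarith [hx u hu])
    calc s (x - u) ^ 2 * exp (g x) ≤ s (x - u) ^ 2 * (exp (14 / 5) * exp (g (x - u))) := by gcongr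
      _ = _ := by ring
  have hv : (|g (x - T) - g x| / T) ^ 2 = m ^ 2 := by
    rw [hm, div_pow, div_pow, sq_abs]; ring
  rw [hv]
  calc m ^ 2 * exp (g x) = 1 / T * (m ^ 2 * T * exp (g x)) := by field_simp
    _ ≤ 1 / T * ((∫ u in (0 : ℝ)..T, s (x - u) ^ 2) * exp (g x)) := by gcongr
    _ ≤ 1 / T * (exp (14 / 5) * ∫ u in (0 : ℝ)..T, s (x - u) ^ 2 * exp (g (x - u))) := by gcongr
    _ = _ := by ring

/-- The pointwise bound: the exponentially weighted square of the normalised increment is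
controlled by averages and translates of the Fisher information integrand
`q x = s x ^ 2 * exp (g x)`. -/
lemma pointwise_bound {g s : ℝ → ℝ} (hg : ∀ x, HasDerivAt g (s x) x) (hs : Continuous s)
    (hmono : Monotone (fun x => s x + x)) {T : ℝ} (hT : 0 < T) (hT2 : T ≤ 2) (q : ℝ → ℝ)
    (hq : q = fun x => s x ^ 2 * exp (g x)) (x : ℝ) :
    (|g (x - T) - g x| / T) ^ 2 * exp (|g (x - T) - g x| / T / 2) * exp (g x)
      ≤ 33.2 * (1 / T * ∫ u in (0 : ℝ)..T, q (x - u)) + 24.72 * {x | 0 < s x}.indicator q x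
        + 24.72 * {x | 0 < s x}ᶜ.indicator q (x - T) + 1.03 * q (x + 1)
        + 1.03 * q (x - T - 1) := by
  have hstar := tangent_bound hg hmono
  set v := |g (x - T) - g x| / T with hv
  have hv0 : 0 ≤ v := by positivity
  have hq0 : ∀ y, 0 ≤ q y := fun y => by rw [hq]; positivity
  have hI : 0 ≤ ∫ u in (0 : ℝ)..T, q (x - u) :=
    intervalIntegral.integral_nonneg hT.le fun u _ => hq0 _
  have hI' : 0 ≤ 1 / T * ∫ u in (0 : ℝ)..T, q (x - u) := by positivity
  have hp : 0 ≤ {x | 0 < s x}.indicator q x := Set.indicator_nonneg (fun y _ => hq0 y) _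
  have hn : 0 ≤ {x | 0 < s x}ᶜ.indicator q (x - T) := Set.indicator_nonneg (fun y _ => hq0 y) _
  have hq1 := hq0 (x + 1)
  have hq2 := hq0 (x - T - 1)
  have hlow : v ≤ 7 / 5 → (∀ u ∈ Set.Icc 0 T, g x - 14 / 5 ≤ g (x - u)) →
      v ^ 2 * exp (v / 2) * exp (g x) ≤ 33.2 * (1 / T * ∫ u in (0 : ℝ)..T, q (x - u)) := by
    intro hv1 hu
    have h1 := sq_increment_bound hg hs hT hu
    rw [← hv] at h1
    have h2 : exp (v / 2) ≤ exp (7 / 10) := exp_le_exp.2 (by linarith)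
    have h3 : exp (7 / 10) * exp (14 / 5) ≤ 33.2 := by
      rw [← exp_add]; norm_num; exact le_trans exp_seven_halves_le (by norm_num)
    calc v ^ 2 * exp (v / 2) * exp (g x) = exp (v / 2) * (v ^ 2 * exp (g x)) := by ring
      _ ≤ exp (7 / 10) * (exp (14 / 5) * (1 / T * ∫ u in (0 : ℝ)..T, q (x - u))) := by
        rw [hq]; gcongr
      _ = exp (7 / 10) * exp (14 / 5) * (1 / T * ∫ u in (0 : ℝ)..T, q (x - u)) := by ring
      _ ≤ _ := by gcongr
  have hmon : ∀ {z M}, 0 ≤ M → v ≤ M + 1 → g x ≤ g z →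
      v ^ 2 * exp (v / 2) * exp (g x) ≤ (M + 1) ^ 2 * exp ((M + 1) / 2) * exp (g z) := by
    intro z M hM h1 h2
    gcongr
  rcases le_total (g (x - T)) (g x) with hle | hle
  · -- `g` increases over `[x - T, x]`, so the score at `x` controls the increment.
    have hvM : v ≤ s x + 1 := by
      rw [hv, abs_of_nonpos (by linarith), div_le_iff₀ hT]
      nlinarith [hstar x (x - T)]
    rcases le_total (s x) (2 / 5) with hc | hc
    · have := hlow (by linarith) fun u hu => by
        have := hstar x (x - u)
        nlinarith [hu.1, hu.2, mul_nonneg hu.1 (sub_nonneg.2 hc),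
          mul_nonneg hu.1 (sub_nonneg.2 (hu.2.trans hT2))]
      linarith
    · have h1 := transport_bound (M := s x) (M' := s (x + 1)) (a := g x) (b := g (x + 1)) hc
        (by have := hmono (show x ≤ x + 1 by linarith); simp only at this; linarith)
        (by have := hstar x (x + 1); ring_nf at this ⊢; linarith)
      have h2 := hmon (z := x) (by linarith) hvM le_rfl
      have h3 : {x | 0 < s x}.indicator q x = s x ^ 2 * exp (g x) := by
        rw [Set.indicator_of_mem (by show 0 < s x; linarith), hq]
      have h4 : q (x + 1) = s (x + 1) ^ 2 * exp (g (x + 1)) := by rw [hq]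
      rw [h3, h4]
      linarith
  · -- `g` decreases over `[x - T, x]`, so the score at `x - T` controls the increment.
    have hvM : v ≤ -s (x - T) + 1 := by
      rw [hv, abs_of_nonneg (by linarith), div_le_iff₀ hT]
      nlinarith [hstar (x - T) x]
    rcases le_total (-s (x - T)) (2 / 5) with hc | hc
    · have := hlow (by linarith) fun u hu => by
        have := hstar (x - T) (x - u)
        have hw : 0 ≤ T - u := sub_nonneg.2 hu.2
        have hw2 : 0 ≤ 2 - (T - u) := by linarith [hu.1]
        nlinarith [mul_nonneg hw (sub_nonneg.2 hc), mul_nonneg hw hw2]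
      linarith
    · have h1 := transport_bound (M := -s (x - T)) (M' := -s (x - T - 1)) (a := g (x - T))
        (b := g (x - T - 1)) hc
        (by have := hmono (show x - T - 1 ≤ x - T by linarith); simp only at this; linarith)
        (by have := hstar (x - T) (x - T - 1); ring_nf at this ⊢; linarith)
      have h2 := hmon (z := x - T) (by linarith) hvM hle
      have h3 : {x | 0 < s x}ᶜ.indicator q (x - T) = (-s (x - T)) ^ 2 * exp (g (x - T)) := by
        rw [Set.indicator_of_mem (by show ¬ 0 < s (x - T); linarith), hq, neg_sq]
      have h4 : q (x - T - 1) = (-s (x - T - 1)) ^ 2 * exp (g (x - T - 1)) := by rw [hq, neg_sq]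
      rw [h3, h4]
      linarith

/-! ### Integration -/

/-- The moment bound for `r = 1`, written for an arbitrary log-density `g`. -/
lemma lintegral_moment_bound {g s : ℝ → ℝ} (hg : ∀ x, HasDerivAt g (s x) x) (hs : Continuous s)
    (hmono : Monotone (fun x => s x + x)) {T : ℝ} (hT : 0 < T) (hT2 : T ≤ 2) {k : ℕ}
    (hk : 3 ≤ k) :
    ∫⁻ x, ENNReal.ofReal (|g (x - T) - g x| ^ k * exp (g x))
      ≤ ENNReal.ofReal ((k.factorial : ℝ) / 2 * (15 * T) ^ (k - 2) * T ^ 2)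
        * ∫⁻ x, ENNReal.ofReal (s x ^ 2 * exp (g x)) := by
  have hgc : Continuous g := continuous_iff_continuousAt.2 fun x => (hg x).continuousAt
  set q : ℝ → ℝ := fun x => s x ^ 2 * exp (g x) with hq
  have hqc : Continuous q := (hs.pow 2).mul (continuous_exp.comp hgc)
  have hq0 : ∀ y, 0 ≤ q y := fun y => by rw [hq]; positivity
  set Q : ℝ → ENNReal := fun x => ENNReal.ofReal (q x) with hQ
  have hQc : Continuous Q := ENNReal.continuous_ofReal.comp hqc
  set J : ENNReal := ∫⁻ x, Q x with hJ
  set A : Set ℝ := {x | 0 < s x} with hA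
  have hAm : MeasurableSet A := (isOpen_lt continuous_const hs).measurableSet
  set v : ℝ → ℝ := fun x => |g (x - T) - g x| / T with hv
  have hv0 : ∀ x, 0 ≤ v x := fun x => by rw [hv]; positivity
  have hmain : ∫⁻ x, ENNReal.ofReal (v x ^ 2 * exp (v x / 2) * exp (g x))
      ≤ ENNReal.ofReal 61 * J := by
    have hpt : ∀ x, ENNReal.ofReal (v x ^ 2 * exp (v x / 2) * exp (g x))
        ≤ ENNReal.ofReal (33.2 / T) * (∫⁻ u in Set.Ioc 0 T, Q (x - u))
          + ENNReal.ofReal 24.72 * A.indicator Q x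
          + ENNReal.ofReal 24.72 * Aᶜ.indicator Q (x - T)
          + ENNReal.ofReal 1.03 * Q (x + 1) + ENNReal.ofReal 1.03 * Q (x - T - 1) := by
      intro x
      have hI : ENNReal.ofReal (∫ u in (0 : ℝ)..T, q (x - u)) = ∫⁻ u in Set.Ioc 0 T, Q (x - u) := by
        rw [intervalIntegral.integral_of_le hT.le]
        refine ofReal_integral_eq_lintegral_ofReal ?_ (Filter.Eventually.of_forall fun u => hq0 _)
        exact ((hqc.comp (by fun_prop : Continuous fun u : ℝ => x - u)).intervalIntegrable 0 T).1
      have hI0 : 0 ≤ ∫ u in (0 : ℝ)..T, q (x - u) :=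
        intervalIntegral.integral_nonneg hT.le fun u _ => hq0 _
      have hind : ∀ (B : Set ℝ) y, B.indicator Q y = ENNReal.ofReal (B.indicator q y) := by
        intro B y
        by_cases h : y ∈ B <;> simp [h, hQ]
      have hind0 : ∀ (B : Set ℝ) y, 0 ≤ B.indicator q y := fun B y =>
        Set.indicator_nonneg (fun z _ => hq0 z) _
      have h1 := hind0 A x
      have h2 := hind0 Aᶜ (x - T)
      have h3 := hq0 (x + 1)
      have h4 := hq0 (x - T - 1)
      rw [← hI, hind, hind, hQ, ← ENNReal.ofReal_mul (by positivity),
        ← ENNReal.ofReal_mul (by positivity), ← ENNReal.ofReal_mul (by positivity),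
        ← ENNReal.ofReal_mul (by positivity), ← ENNReal.ofReal_mul (by positivity),
        ← ENNReal.ofReal_add (by positivity) (by positivity),
        ← ENNReal.ofReal_add (by positivity) (by positivity),
        ← ENNReal.ofReal_add (by positivity) (by positivity),
        ← ENNReal.ofReal_add (by positivity) (by positivity)]
      refine ENNReal.ofReal_le_ofReal ((pointwise_bound hg hs hmono hT hT2 q hq x).trans_eq ?_)
      ring
    have hQm : Measurable Q := hQc.measurable
    have hip : Measurable (A.indicator Q) := hQm.indicator hAm
    have hin : Measurable (Aᶜ.indicator Q) := hQm.indicator hAm.compl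
    have hQ2 : Measurable (fun p : ℝ × ℝ => Q (p.1 - p.2)) := hQm.comp (by fun_prop)
    have hIm : Measurable fun x => ∫⁻ u in Set.Ioc 0 T, Q (x - u) := hQ2.lintegral_prod_right'
    have hc0 : ∫⁻ x, ∫⁻ u in Set.Ioc 0 T, Q (x - u) = ENNReal.ofReal T * J := by
      rw [lintegral_lintegral_swap hQ2.aemeasurable]
      simp_rw [lintegral_sub_right_eq_self (fun y => Q y)]
      rw [setLIntegral_const, Real.volume_Ioc, sub_zero, mul_comm]
    have hc1 : ∫⁻ x, Aᶜ.indicator Q (x - T) = ∫⁻ x, Aᶜ.indicator Q x :=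
      lintegral_sub_right_eq_self _ T
    have hc2 : ∫⁻ x, Q (x + 1) = J := lintegral_add_right_eq_self _ 1
    have hc3 : ∫⁻ x, Q (x - T - 1) = J := by
      simp_rw [sub_sub]
      exact lintegral_sub_right_eq_self _ _
    have hc4 : (∫⁻ x, A.indicator Q x) + ∫⁻ x, Aᶜ.indicator Q x = J := by
      rw [lintegral_indicator hAm, lintegral_indicator hAm.compl, lintegral_add_compl _ hAm]
    refine (lintegral_mono hpt).trans ?_
    rw [lintegral_add_right _ (by fun_prop), lintegral_add_right _ (by fun_prop),
      lintegral_add_right _ (by fun_prop), lintegral_add_right _ (by fun_prop),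
      lintegral_const_mul _ hIm, lintegral_const_mul _ hip, lintegral_const_mul _ (by fun_prop),
      lintegral_const_mul _ (by fun_prop), lintegral_const_mul _ (by fun_prop),
      hc0, hc1, hc2, hc3]
    calc _ = ENNReal.ofReal (33.2 / T) * ENNReal.ofReal T * J
          + ENNReal.ofReal 24.72 * ((∫⁻ x, A.indicator Q x) + ∫⁻ x, Aᶜ.indicator Q x)
          + ENNReal.ofReal 1.03 * J + ENNReal.ofReal 1.03 * J := by ring
      _ = (ENNReal.ofReal (33.2 / T) * ENNReal.ofReal T + ENNReal.ofReal 24.72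
          + ENNReal.ofReal 1.03 + ENNReal.ofReal 1.03) * J := by rw [hc4]; ring
      _ ≤ ENNReal.ofReal 61 * J := by
        gcongr
        rw [← ENNReal.ofReal_mul (by positivity), ← ENNReal.ofReal_add (by positivity)
          (by positivity), ← ENNReal.ofReal_add (by positivity) (by positivity),
          ← ENNReal.ofReal_add (by positivity) (by positivity)]
        refine ENNReal.ofReal_le_ofReal ?_
        rw [div_mul_cancel₀ _ hT.ne']
        norm_num
  obtain ⟨m, rfl⟩ : ∃ m, k = m + 2 := ⟨k - 2, by omega⟩
  have hm : 1 ≤ m := by omega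
  set D : ℝ := T ^ (m + 2) * (((m + 2).factorial : ℝ) / 2 * 15 ^ m / 61) with hD
  have hD0 : 0 ≤ D := by positivity
  calc ∫⁻ x, ENNReal.ofReal (|g (x - T) - g x| ^ (m + 2) * exp (g x))
      ≤ ∫⁻ x, ENNReal.ofReal D * ENNReal.ofReal (v x ^ 2 * exp (v x / 2) * exp (g x)) := by
        refine lintegral_mono fun x => ?_
        rw [← ENNReal.ofReal_mul hD0]
        refine ENNReal.ofReal_le_ofReal ?_
        have h1 : |g (x - T) - g x| = T * v x := by rw [hv]; field_simp
        have h2 := pow_le_factorial_mul_exp (hv0 x) hm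
        rw [h1]
        calc (T * v x) ^ (m + 2) * exp (g x)
            = T ^ (m + 2) * (v x ^ 2 * v x ^ m * exp (g x)) := by ring
          _ ≤ T ^ (m + 2) * (v x ^ 2 * (((m + 2).factorial : ℝ) / 2 * 15 ^ m / 61
              * exp (v x / 2)) * exp (g x)) := by gcongr
          _ = _ := by rw [hD]; ring
    _ = ENNReal.ofReal D * ∫⁻ x, ENNReal.ofReal (v x ^ 2 * exp (v x / 2) * exp (g x)) :=
        lintegral_const_mul' _ _ ENNReal.ofReal_ne_top
    _ ≤ ENNReal.ofReal D * (ENNReal.ofReal 61 * J) := by gcongr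
    _ = _ := by
        rw [← mul_assoc, ← ENNReal.ofReal_mul hD0, hD]
        congr 2
        rw [Nat.add_sub_cancel, mul_pow]
        ring

/-- There is a universal constant `C > 0` such that for `k ≥ 3` and `0 < ε ≤ r`,
the log-likelihood ratio `γ(x) = log(f_r^{2ε}(x)/f_r(x))` satisfies
`E_{x~f_r}[|γ|^k] ≤ (k!/2)·(30ε/r)^(k−2)·4ε²I_r·(1 + C·(ε/r)·√(log(1/(r²I_r))))`. -/
theorem loglik_ratio_kth_moment_bound :
    ∃ C : ℝ, 0 < C ∧ ∀ (f : ℝ → ℝ) (r : ℝ), IsDensity f → 0 < r →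
      0 < fisherInfo f r →
      ∀ k : ℕ, 3 ≤ k → ∀ ε : ℝ, 0 < ε → ε ≤ r →
      (∫ x, |Real.log (smoothed f r (x - 2 * ε) / smoothed f r x)| ^ k * smoothed f r x) ≤
        ((Nat.factorial k : ℝ) / 2) * (30 * ε / r) ^ (k - 2) *
          (4 * ε ^ 2 * fisherInfo f r) *
          (1 + C * (ε / r) * Real.sqrt (Real.log (1 / (r ^ 2 * fisherInfo f r)))) := by
  refine ⟨1, one_pos, fun f r hf hr hI k hk ε hε hεr => ?_⟩
  obtain ⟨g, s, hg, hs, hmono, hfg⟩ := exists_log_smoothed hf hr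
  have hsm : ∀ x, smoothed f r x = exp (g (x / r)) := by
    intro x
    rw [← hfg, mul_div_cancel₀ _ hr.ne']
  have hscore : ∀ x, score f r x = s (x / r) / r := by
    intro x
    have hd : HasDerivAt (fun t => smoothed f r t) (exp (g (x / r)) * (s (x / r) * (1 / r))) x := by
      have h := ((hg (x / r)).comp x ((hasDerivAt_id x).div_const r)).exp
      refine HasDerivAt.congr_of_eventuallyEq h (Filter.Eventually.of_forall fun t => ?_)
      simp [hsm]
    rw [score, hd.deriv, hsm]
    have := (exp_pos (g (x / r))).ne'
    field_simp
  set T : ℝ := 2 * ε / r with hT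
  have hT0 : 0 < T := by positivity
  have hT2 : T ≤ 2 := by rw [hT, div_le_iff₀ hr]; linarith
  -- Both integrals are rewritten in the variable `x / r`.
  have hFI : r * fisherInfo f r = ∫ x, s x ^ 2 * exp (g x) := by
    have h1 : fisherInfo f r = ∫ x, (fun z => (1 / r ^ 2) * (s z ^ 2 * exp (g z))) (x / r) := by
      refine integral_congr_ae (Filter.Eventually.of_forall fun x => ?_)
      simp only [hscore, hsm]
      ring
    rw [h1, Measure.integral_comp_div (fun z => (1 / r ^ 2) * (s z ^ 2 * exp (g z))), integral_const_mul, abs_of_pos hr, smul_eq_mul]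
    field_simp
  have hLHS : (∫ x, |Real.log (smoothed f r (x - 2 * ε) / smoothed f r x)| ^ k * smoothed f r x)
      = r * ∫ x, |g (x - T) - g x| ^ k * exp (g x) := by
    have h1 : ∀ x, |Real.log (smoothed f r (x - 2 * ε) / smoothed f r x)| ^ k * smoothed f r x
        = (fun z => |g (z - T) - g z| ^ k * exp (g z)) (x / r) := by
      intro x
      simp only [hsm]
      rw [← exp_sub, log_exp, sub_div, hT]
    simp_rw [h1]
    rw [Measure.integral_comp_div (fun z => |g (z - T) - g z| ^ k * exp (g z)), abs_of_pos hr,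
      smul_eq_mul]
  have hint : Integrable fun x => s x ^ 2 * exp (g x) := by
    -- a nonzero Bochner integral has an integrable integrand
    refine not_imp_comm.1 integral_undef ?_
    rw [← hFI]
    positivity
  have hgc : Continuous g := continuous_iff_continuousAt.2 fun x => (hg x).continuousAt
  have hbound : ∫ x, |g (x - T) - g x| ^ k * exp (g x)
      ≤ (k.factorial : ℝ) / 2 * (15 * T) ^ (k - 2) * T ^ 2 * (r * fisherInfo f r) := by
    have hmeas : Continuous fun x => |g (x - T) - g x| ^ k * exp (g x) := by fun_prop
    rw [integral_eq_lintegral_of_nonneg_ae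
      (Filter.Eventually.of_forall fun x => by positivity) hmeas.aestronglyMeasurable]
    refine ENNReal.toReal_le_of_le_ofReal (by positivity) ?_
    refine (lintegral_moment_bound hg hs hmono hT0 hT2 hk).trans_eq ?_
    rw [← ofReal_integral_eq_lintegral_ofReal hint
      (Filter.Eventually.of_forall fun x => by positivity), ← hFI,
      ← ENNReal.ofReal_mul (by positivity)]
  have hroot : 1 ≤ 1 + 1 * (ε / r) * √(log (1 / (r ^ 2 * fisherInfo f r))) := by
    have : 0 ≤ 1 * (ε / r) * √(log (1 / (r ^ 2 * fisherInfo f r))) := by positivity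
    linarith
  rw [hLHS]
  refine le_trans ?_ (le_mul_of_one_le_right (by positivity) hroot)
  refine (mul_le_mul_of_nonneg_left hbound hr.le).trans_eq ?_
  have h15 : 15 * T = 30 * ε / r := by rw [hT]; ring
  rw [h15, hT]
  field_simp
  ring

end
end
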